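/- arXiv:1304.3918 — 2 statements merged into one kernel-verified Lean document; each statement's English description precedes it below -/
import Mathlib

section
/- Let n ≥ 3, μ ∈ ℝ, σ > 0 and ξ ∈ ℝ (possibly 0). Let (r_{IJ}) be any family of real weights indexed by pairs (I,J) with 1 ≤ I and I + 2 ≤ J ≤ n, satisfying ∑_{I,J} r_{IJ} = 1. Then the function g ↦ ∑_{I,J} r_{IJ} · ξ̂_{IJ}(u_ξ(g_1), …, u_ξ(g_n)) is Lebesgue integrable on Δ_n and n! · ∫_{Δ_n} ∑_{I,J} r_{IJ} · ξ̂_{IJ}(u_ξ(g_1), …, u_ξ(g_n)) dg = ξ. That is, every unit-sum linear combination of elemental estimators is an unbiased estimator of the GPD tail parameter. -/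
open MeasureTheory Real Set

/-- The GPD tail-quantile function: `u_ξ(t) = μ + (σ/ξ)(t^{-ξ} - 1)` for `ξ ≠ 0`,
and `u_0(t) = μ - σ log t`. -/
noncomputable def gpdQ (μ σ ξ : ℝ) (t : ℝ) : ℝ :=
  if ξ = 0 then μ - σ * Real.log t else μ + σ / ξ * (t ^ (-ξ) - 1)

/-- The open simplex `Δ_n = {g : 0 < g 1 < ⋯ < g n < 1}` in `ℝ^n`. -/
def simplex (n : ℕ) : Set (Fin n → ℝ) :=
  {g | StrictMono g ∧ ∀ i, 0 < g i ∧ g i < 1}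

/-- The data tuple `X_i = u(g_i)` (1-based indexing: `sample n u g i = u (g_{i-1})`,
for `1 ≤ i ≤ n`; junk value `0` outside this range). -/
noncomputable def sample (n : ℕ) (u : ℝ → ℝ) (g : Fin n → ℝ) : ℕ → ℝ :=
  fun i => if h : i - 1 < n then u (g ⟨i - 1, h⟩) else 0

/-- The elemental estimator
`ξ̂_{IJ}(x) = (J−1)·log(x_I − x_{J−1}) − (J−1−I)·log(x_I − x_J) − I·log(x_{I+1} − x_J)`. -/
noncomputable def elemental (I J : ℕ) (x : ℕ → ℝ) : ℝ :=
  ((J : ℝ) - 1) * Real.log (x I - x (J - 1))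
    - ((J : ℝ) - 1 - (I : ℝ)) * Real.log (x I - x J)
    - (I : ℝ) * Real.log (x (I + 1) - x J)


lemma lintegral_eq_zero_forall {α : Type*} [MeasurableSpace α] (ν : Measure α) (f : α → ENNReal)
    (h : ∀ x, f x = 0) : ∫⁻ x, f x ∂ν = 0 := by simp [h]

/-- The scaled open simplex. -/
def simplexS (n : ℕ) (c : ℝ) : Set (Fin n → ℝ) :=
  {g | StrictMono g ∧ ∀ i, 0 < g i ∧ g i < c}

lemma snoc_mem_simplexS (n : ℕ) (c x : ℝ) (g : Fin n → ℝ) :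
    (Fin.snoc g x : Fin (n + 1) → ℝ) ∈ simplexS (n + 1) c ↔ x ∈ Ioo 0 c ∧ g ∈ simplexS n x := by
  constructor
  · rintro ⟨h1, h2⟩
    have hl := h2 (Fin.last n)
    simp only [Fin.snoc_last] at hl
    refine ⟨hl, ?_, fun i => ?_⟩
    · intro a b hab
      have := h1 (Fin.castSucc_lt_castSucc_iff.2 hab)
      simpa only [Fin.snoc_castSucc] using this
    · have h3 := h2 i.castSucc
      have h4 := h1 (Fin.castSucc_lt_last i)
      simp only [Fin.snoc_castSucc, Fin.snoc_last] at h3 h4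
      exact ⟨h3.1, h4⟩
  · rintro ⟨hx, h1, h2⟩
    refine ⟨?_, ?_⟩
    · intro a b
      refine Fin.lastCases ?_ (fun b => ?_) b
      · refine Fin.lastCases ?_ (fun a => ?_) a
        · intro h; exact absurd h (lt_irrefl _)
        · intro _
          simp only [Fin.snoc_castSucc, Fin.snoc_last]
          exact (h2 a).2
      · refine Fin.lastCases ?_ (fun a => ?_) a
        · intro h; exact absurd (h.trans (Fin.castSucc_lt_last b)) (lt_irrefl _)
        · intro h
          simp only [Fin.snoc_castSucc]
          exact h1 (Fin.castSucc_lt_castSucc_iff.1 h)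
    · intro i
      refine Fin.lastCases ?_ (fun i => ?_) i
      · simp only [Fin.snoc_last]; exact hx
      · simp only [Fin.snoc_castSucc]
        exact ⟨(h2 i).1, (h2 i).2.trans hx.2⟩

lemma measurableSet_simplexS (n : ℕ) (c : ℝ) : MeasurableSet (simplexS n c) := by
  have : simplexS n c = (⋂ i : Fin n, ⋂ j : Fin n, {g | i < j → g i < g j}) ∩
      ⋂ i : Fin n, ({g | 0 < g i} ∩ {g | g i < c}) := by
    ext g
    simp [simplexS, StrictMono]
  rw [this]
  refine MeasurableSet.inter (MeasurableSet.iInter fun i => MeasurableSet.iInter fun j => ?_)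
    (MeasurableSet.iInter fun i => MeasurableSet.inter ?_ ?_)
  · by_cases h : i < j
    · simp only [h, true_imp_iff]
      exact measurableSet_lt (measurable_pi_apply i) (measurable_pi_apply j)
    · simp [h]
  · exact measurableSet_lt measurable_const (measurable_pi_apply i)
  · exact measurableSet_lt (measurable_pi_apply i) measurable_const

lemma measurable_snoc (n : ℕ) :
    Measurable (fun p : ℝ × (Fin n → ℝ) => (Fin.snoc p.2 p.1 : Fin (n + 1) → ℝ)) := by
  refine measurable_pi_lambda _ fun i => ?_
  refine Fin.lastCases ?_ (fun i => ?_) i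
  · simp only [Fin.snoc_last]; exact measurable_fst
  · simp only [Fin.snoc_castSucc]; exact (measurable_pi_apply i).comp measurable_snd

lemma lintegral_simplexS_succ (n : ℕ) (c : ℝ) (F : (Fin (n + 1) → ℝ) → ENNReal)
    (hF : Measurable F) :
    ∫⁻ g in simplexS (n + 1) c, F g =
      ∫⁻ x in Ioo 0 c, ∫⁻ g in simplexS n x, F (Fin.snoc g x) := by
  have hm := (measurableSet_simplexS (n + 1) c)
  rw [← lintegral_indicator hm]
  have hG : Measurable ((simplexS (n + 1) c).indicator F) := hF.indicator hm
  have e := (volume_preserving_piFinSuccAbove (fun _ : Fin (n + 1) => ℝ) (Fin.last n)).symm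
  rw [← e.lintegral_comp hG]
  have h1 : ∀ p : ℝ × (Fin n → ℝ),
      (MeasurableEquiv.piFinSuccAbove (fun _ : Fin (n + 1) => ℝ) (Fin.last n)).symm p
        = Fin.snoc p.2 p.1 := by
    intro p
    rw [← Fin.insertNth_last']
    rfl
  simp only [h1]
  rw [Measure.volume_eq_prod, lintegral_prod (fun p : ℝ × (Fin n → ℝ) => (simplexS (n + 1) c).indicator F (Fin.snoc p.2 p.1))
      (hG.comp (measurable_snoc n)).aemeasurable,
    ← lintegral_indicator measurableSet_Ioo]
  refine lintegral_congr fun x => ?_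
  by_cases hx : x ∈ Ioo 0 c
  · rw [indicator_of_mem hx, ← lintegral_indicator (measurableSet_simplexS n x)]
    refine lintegral_congr fun g => ?_
    by_cases hg : g ∈ simplexS n x
    · rw [indicator_of_mem hg, indicator_of_mem]
      exact (snoc_mem_simplexS n c x g).2 ⟨hx, hg⟩
    · rw [indicator_of_notMem hg, indicator_of_notMem]
      exact fun h => hg ((snoc_mem_simplexS n c x g).1 h).2
  · rw [indicator_of_notMem hx]
    refine lintegral_eq_zero_forall _ _ fun g => ?_
    beta_reduce
    rw [indicator_of_notMem]
    exact fun h => hx ((snoc_mem_simplexS n c x g).1 h).1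

lemma lintegral_pow_Ioo (m : ℕ) (a c : ℝ) (h : a ≤ c) :
    ∫⁻ x in Ioo a c, ENNReal.ofReal ((x - a) ^ m) = ENNReal.ofReal ((c - a) ^ (m + 1) / (m + 1)) := by
  rw [← ofReal_integral_eq_lintegral_ofReal]
  · rw [← integral_Ioc_eq_integral_Ioo, ← intervalIntegral.integral_of_le h,
      intervalIntegral.integral_comp_sub_right (fun x => x ^ m), integral_pow]
    simp
  · exact ((by fun_prop : Continuous fun x : ℝ => (x - a) ^ m).integrableOn_Icc (a := a) (b := c)).mono_set
      Ioo_subset_Icc_self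
  · rw [Filter.EventuallyLE, ae_restrict_iff' measurableSet_Ioo]
    exact Filter.Eventually.of_forall fun x hx => pow_nonneg (by linarith [hx.1]) _

lemma lintegral_const_mul_pow (m : ℕ) (K a c : ℝ) (hK : 0 ≤ K) (h : a ≤ c) :
    ∫⁻ x in Ioo a c, ENNReal.ofReal (K * (x - a) ^ m)
      = ENNReal.ofReal (K * ((c - a) ^ (m + 1) / (m + 1))) := by
  simp only [ENNReal.ofReal_mul hK]
  rw [lintegral_const_mul _ (by fun_prop), lintegral_pow_Ioo m a c h]

lemma volume_simplexS (n : ℕ) : ∀ c : ℝ, 0 ≤ c →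
    ∫⁻ _ in simplexS n c, (1 : ENNReal) = ENNReal.ofReal (c ^ n / n.factorial) := by
  induction n with
  | zero =>
    intro c hc
    have : simplexS 0 c = univ := by
      ext g; simp [simplexS, StrictMono]
    simp [this, Measure.volume_pi_eq_dirac (ι := Fin 0) (x := 0)]
  | succ n ih =>
    intro c hc
    rw [lintegral_simplexS_succ n c _ measurable_const]
    rw [setLIntegral_congr_fun (g := fun x => ENNReal.ofReal ((1 / n.factorial) * (x - 0) ^ n))
      measurableSet_Ioo]
    · rw [lintegral_const_mul_pow _ _ _ _ (by positivity) hc]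
      congr 1
      rw [Nat.factorial_succ]; push_cast; field_simp; simp
    · intro x hx
      beta_reduce
      rw [ih x hx.1.le]
      congr 1
      rw [sub_zero]; ring

lemma lintegral_coord (f : ℝ → ENNReal) (hf : Measurable f) (n : ℕ) :
    ∀ (k : Fin n) (c : ℝ), 0 ≤ c → ∫⁻ g in simplexS n c, f (g k) =
      ∫⁻ t in Ioo 0 c, f t * ENNReal.ofReal
        (t ^ (k : ℕ) / (k : ℕ).factorial * ((c - t) ^ (n - 1 - k) / (n - 1 - k).factorial)) := by
  induction n with
  | zero => intro k; exact k.elim0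
  | succ n ih =>
    intro k c hc
    rw [lintegral_simplexS_succ n c (fun g => f (g k)) (hf.comp (measurable_pi_apply k))]
    refine Fin.lastCases ?_ (fun k => ?_) k
    · simp only [Fin.snoc_last, Fin.val_last]
      refine setLIntegral_congr_fun measurableSet_Ioo fun x hx => ?_
      beta_reduce
      rw [← mul_one (f x), lintegral_const_mul _ measurable_const, volume_simplexS n x hx.1.le]
      simp
    · simp only [Fin.snoc_castSucc, Fin.val_castSucc]
      have hk := k.2
      rw [setLIntegral_congr_fun (g := fun x => ∫⁻ t in Ioo 0 x, f t * ENNReal.ofReal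
        (t ^ (k : ℕ) / (k : ℕ).factorial * ((x - t) ^ (n - 1 - k) / (n - 1 - k).factorial)))
        measurableSet_Ioo (fun x hx => ih k x hx.1.le)]
      obtain ⟨m, hm⟩ : ∃ m, n - 1 - (k : ℕ) = m := ⟨_, rfl⟩
      have hm' : n + 1 - 1 - (k : ℕ) = m + 1 := by omega
      rw [hm, hm']
      set G : ℝ → ℝ → ENNReal := fun x t =>
        {p : ℝ × ℝ | 0 < p.2 ∧ p.2 < p.1 ∧ p.1 < c}.indicator (fun p => f p.2 * ENNReal.ofReal
        (p.2 ^ (k : ℕ) / (k : ℕ).factorial * ((p.1 - p.2) ^ m / m.factorial))) (x, t) with hG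
      have hset : MeasurableSet {p : ℝ × ℝ | 0 < p.2 ∧ p.2 < p.1 ∧ p.1 < c} := by
        refine MeasurableSet.inter (measurableSet_lt measurable_const measurable_snd)
          (MeasurableSet.inter (measurableSet_lt measurable_snd measurable_fst)
          (measurableSet_lt measurable_fst measurable_const))
      have hGm : Measurable (Function.uncurry G) := by
        refine Measurable.indicator ?_ hset
        refine (hf.comp measurable_snd).mul ?_
        fun_prop
      have h1 : ∫⁻ x in Ioo 0 c, (∫⁻ t in Ioo 0 x, f t * ENNReal.ofReal
          (t ^ (k : ℕ) / (k : ℕ).factorial * ((x - t) ^ m / m.factorial)))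
          = ∫⁻ x, ∫⁻ t, G x t := by
        rw [← lintegral_indicator measurableSet_Ioo]
        refine lintegral_congr fun x => ?_
        by_cases hx : x ∈ Ioo 0 c
        · rw [indicator_of_mem hx, ← lintegral_indicator measurableSet_Ioo]
          refine lintegral_congr fun t => ?_
          simp only [hG, indicator, mem_Ioo, mem_ofPred_eq, hx.2, and_true]
        · rw [indicator_of_notMem hx]
          symm
          refine lintegral_eq_zero_forall _ _ fun t => ?_
          simp only [hG]
          rw [indicator_of_notMem]
          rintro ⟨h1, h2, h3⟩
          exact hx ⟨h1.trans h2, h3⟩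
      rw [h1, lintegral_lintegral_swap hGm.aemeasurable, ← lintegral_indicator measurableSet_Ioo]
      refine lintegral_congr fun t => ?_
      by_cases ht : t ∈ Ioo 0 c
      · rw [indicator_of_mem ht]
        have h2 : ∀ x, G x t = (Ioo t c).indicator (fun x => f t * ENNReal.ofReal
          ((t ^ (k : ℕ) / (k : ℕ).factorial / m.factorial) * (x - t) ^ m)) x := by
          intro x
          simp only [hG, indicator, mem_Ioo, mem_ofPred_eq, ht.1, true_and]
          congr 3; ring
        simp only [h2]
        rw [lintegral_indicator measurableSet_Ioo, lintegral_const_mul _ (by fun_prop),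
          lintegral_const_mul_pow _ _ _ _ (by have := ht.1; positivity) ht.2.le]
        congr 2
        rw [Nat.factorial_succ m]; push_cast; field_simp
      · rw [indicator_of_notMem ht]
        refine lintegral_eq_zero_forall _ _ fun x => ?_
        simp only [hG]
        rw [indicator_of_notMem]
        rintro ⟨h1, h2, h3⟩
        exact ht ⟨h1, h2.trans h3⟩

lemma lintegral_scale (f : ℝ → ENNReal) (j m : ℕ) (t : ℝ) (ht : 0 < t) :
    ∫⁻ s in Ioo 0 t, f (s / t) * ENNReal.ofReal (s ^ j / j.factorial * ((t - s) ^ m / m.factorial))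
      = ENNReal.ofReal (t ^ (j + m + 1) / (j.factorial * m.factorial)) *
        ∫⁻ v in Ioo 0 1, f v * ENNReal.ofReal (v ^ j * (1 - v) ^ m) := by
  have himg : (fun v => t * v) '' Ioo 0 1 = Ioo 0 t := by
    rw [image_mul_left_Ioo ht]; simp
  rw [← himg, lintegral_image_eq_lintegral_abs_deriv_mul (f' := fun _ => t) measurableSet_Ioo
    (fun x _ => by simpa using ((hasDerivAt_id x).const_mul t).hasDerivWithinAt)
    (fun a _ b _ h => mul_left_cancel₀ ht.ne' h),
    ← lintegral_const_mul' _ _ ENNReal.ofReal_ne_top]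
  refine setLIntegral_congr_fun measurableSet_Ioo fun v hv => ?_
  have h0 : 0 < v := hv.1
  have h1 : 0 < 1 - v := by linarith [hv.2]
  rw [mul_div_cancel_left₀ _ ht.ne', abs_of_pos ht, mul_left_comm, mul_left_comm _ (f v),
    ← ENNReal.ofReal_mul ht.le, ← ENNReal.ofReal_mul (by positivity)]
  congr 2
  have : t - t * v = t * (1 - v) := by ring
  rw [this, mul_pow, mul_pow]
  field_simp
  ring

lemma lintegral_ratio (f : ℝ → ENNReal) (hf : Measurable f) (n : ℕ) :
    ∀ (j k : Fin n), j < k → ∀ (c : ℝ), 0 ≤ c → ∫⁻ g in simplexS n c, f (g j / g k) =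
      ENNReal.ofReal (c ^ n / n.factorial *
        ((k : ℕ).factorial / ((j : ℕ).factorial * ((k : ℕ) - 1 - j).factorial))) *
      ∫⁻ v in Ioo 0 1, f v * ENNReal.ofReal (v ^ (j : ℕ) * (1 - v) ^ ((k : ℕ) - 1 - j)) := by
  induction n with
  | zero => intro j; exact j.elim0
  | succ n ih =>
    intro j k hjk c hc
    rw [lintegral_simplexS_succ n c (fun g => f (g j / g k))
      (hf.comp ((measurable_pi_apply j).div (measurable_pi_apply k)))]
    obtain ⟨j, rfl⟩ : ∃ j' : Fin n, j = j'.castSucc :=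
      ⟨j.castPred (Fin.ne_last_of_lt hjk), by simp⟩
    set A := fun (k : ℕ) => ∫⁻ v in Ioo 0 1, f v * ENNReal.ofReal (v ^ (j : ℕ) * (1 - v) ^ (k - 1 - (j : ℕ)))
      with hA
    revert hjk
    refine Fin.lastCases ?_ (fun k => ?_) k
    · intro _
      simp only [Fin.snoc_last, Fin.snoc_castSucc, Fin.val_last, Fin.val_castSucc]
      have hj := j.2
      rw [setLIntegral_congr_fun (g := fun x => ENNReal.ofReal
        ((1 / ((j : ℕ).factorial * (n - 1 - j).factorial)) * (x - 0) ^ n) * A n) measurableSet_Ioo]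
      · rw [lintegral_mul_const _ (by fun_prop),
          lintegral_const_mul_pow _ _ _ _ (by positivity) hc]
        congr 2
        rw [Nat.factorial_succ]; push_cast; field_simp; simp
      · intro x hx
        beta_reduce
        rw [lintegral_coord (fun s => f (s / x)) (by fun_prop) n j x hx.1.le,
          lintegral_scale f _ _ x hx.1]
        have : (j : ℕ) + (n - 1 - j) + 1 = n := by omega
        rw [this]
        congr 2
        rw [sub_zero]; ring
    · intro hjk
      have hjk' : j < k := Fin.castSucc_lt_castSucc_iff.1 hjk
      simp only [Fin.snoc_castSucc, Fin.val_castSucc]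
      rw [setLIntegral_congr_fun (g := fun x => ENNReal.ofReal
        ((1 / n.factorial * ((k : ℕ).factorial / ((j : ℕ).factorial * ((k : ℕ) - 1 - j).factorial)))
          * (x - 0) ^ n) * A k) measurableSet_Ioo]
      · rw [lintegral_mul_const _ (by fun_prop),
          lintegral_const_mul_pow _ _ _ _ (by positivity) hc]
        congr 2
        rw [Nat.factorial_succ]; push_cast; field_simp; simp
      · intro x hx
        beta_reduce
        rw [ih j k hjk' x hx.1.le]
        congr 2
        rw [sub_zero]; ring

lemma simplex_eq (n : ℕ) : simplex n = simplexS n 1 := rfl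

/-- The normalising constant. -/
noncomputable def ratioC (n j k : ℕ) : ℝ :=
  1 / n.factorial * (k.factorial / (j.factorial * (k - 1 - j).factorial))

lemma ratioC_nonneg (n j k : ℕ) : 0 ≤ ratioC n j k := by unfold ratioC; positivity

lemma map_ratio (n : ℕ) (j k : Fin n) (hjk : j < k) :
    Measure.map (fun g : Fin n → ℝ => g j / g k) (volume.restrict (simplex n)) =
      (volume.restrict (Ioo (0 : ℝ) 1)).withDensity (fun v => ENNReal.ofReal
        (ratioC n j k * (v ^ (j : ℕ) * (1 - v) ^ ((k : ℕ) - 1 - j)))) := by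
  have hm : Measurable (fun g : Fin n → ℝ => g j / g k) :=
    (measurable_pi_apply j).div (measurable_pi_apply k)
  ext s hs
  rw [← lintegral_indicator_one hs, lintegral_map (measurable_one.indicator hs) hm, simplex_eq,
    lintegral_ratio _ (measurable_one.indicator hs) n j k hjk 1 zero_le_one,
    withDensity_apply _ hs, ← lintegral_const_mul' _ _ ENNReal.ofReal_ne_top,
    ← lintegral_indicator hs]
  refine lintegral_congr fun v => ?_
  by_cases hv : v ∈ s
  · rw [indicator_of_mem hv, indicator_of_mem hv, ENNReal.ofReal_mul (ratioC_nonneg n j k)]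
    simp [ratioC]
  · rw [indicator_of_notMem hv, indicator_of_notMem hv]; simp

lemma integrable_weight (φ : ℝ → ℝ) (hφi : IntegrableOn φ (Ioo 0 1)) (j m : ℕ) :
    IntegrableOn (fun v => v ^ j * (1 - v) ^ m * φ v) (Ioo 0 1) := by
  refine Integrable.bdd_mul (c := 1) hφi ?_ ?_
  · exact (by fun_prop : Continuous fun v : ℝ => v ^ j * (1 - v) ^ m).aestronglyMeasurable
  · rw [ae_restrict_iff' measurableSet_Ioo]
    refine Filter.Eventually.of_forall fun v hv => ?_
    have h0 : 0 ≤ v := hv.1.le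
    have h1 : 0 ≤ 1 - v := by linarith [hv.2]
    rw [Real.norm_of_nonneg (by positivity)]
    exact mul_le_one₀ (pow_le_one₀ h0 hv.2.le) (by positivity) (pow_le_one₀ h1 (by linarith))

lemma integral_ratio (φ : ℝ → ℝ) (hφ : Measurable φ) (hφi : IntegrableOn φ (Ioo 0 1))
    (n : ℕ) (j k : Fin n) (hjk : j < k) :
    IntegrableOn (fun g => φ (g j / g k)) (simplex n) ∧
    ∫ g in simplex n, φ (g j / g k) =
      ∫ v in Ioo 0 1, ratioC n j k * (v ^ (j : ℕ) * (1 - v) ^ ((k : ℕ) - 1 - j) * φ v) := by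
  have hm : Measurable (fun g : Fin n → ℝ => g j / g k) :=
    (measurable_pi_apply j).div (measurable_pi_apply k)
  have hd : Measurable (fun v : ℝ => ENNReal.ofReal
        (ratioC n j k * (v ^ (j : ℕ) * (1 - v) ^ ((k : ℕ) - 1 - j)))) := by fun_prop
  have hc : ∀ v ∈ Ioo (0:ℝ) 1, (ENNReal.ofReal
        (ratioC n j k * (v ^ (j : ℕ) * (1 - v) ^ ((k : ℕ) - 1 - j)))).toReal • φ v =
        ratioC n j k * (v ^ (j : ℕ) * (1 - v) ^ ((k : ℕ) - 1 - j) * φ v) := by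
    intro v hv
    have h0 : 0 ≤ v := hv.1.le
    have h1 : 0 ≤ 1 - v := by linarith [hv.2]
    have := ratioC_nonneg n j k
    rw [ENNReal.toReal_ofReal (by positivity), smul_eq_mul]; ring
  have hlt : ∀ᵐ v ∂(volume.restrict (Ioo (0:ℝ) 1)), ENNReal.ofReal
        (ratioC n j k * (v ^ (j : ℕ) * (1 - v) ^ ((k : ℕ) - 1 - j))) < ⊤ :=
    Filter.Eventually.of_forall fun v => ENNReal.ofReal_lt_top
  constructor
  · have h : Integrable φ (Measure.map (fun g : Fin n → ℝ => g j / g k)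
        (volume.restrict (simplex n))) := by
      rw [map_ratio n j k hjk, integrable_withDensity_iff_integrable_smul' hd hlt]
      have := (integrable_weight φ hφi j ((k : ℕ) - 1 - j)).const_mul (ratioC n j k)
      exact (integrableOn_congr_fun hc measurableSet_Ioo).2 this
    exact (integrable_map_measure hφ.aestronglyMeasurable hm.aemeasurable).1 h
  · rw [← integral_map (φ := fun g : Fin n → ℝ => g j / g k) hm.aemeasurable
      hφ.aestronglyMeasurable, map_ratio n j k hjk,
      integral_withDensity_eq_integral_toReal_smul hd hlt]
    exact setIntegral_congr_fun measurableSet_Ioo hc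

lemma gpdQ_hasDerivAt (μ σ ξ t : ℝ) (ht : 0 < t) :
    HasDerivAt (gpdQ μ σ ξ) (-(σ * t ^ (-ξ - 1))) t := by
  by_cases h : ξ = 0
  · have : gpdQ μ σ ξ = fun t => μ - σ * Real.log t := by ext; simp [gpdQ, h]
    rw [this]
    refine HasDerivAt.congr_deriv (((Real.hasDerivAt_log ht.ne').const_mul σ).const_sub μ) ?_
    simp [h, Real.rpow_neg_one]
  · have : gpdQ μ σ ξ = fun t => μ + σ / ξ * (t ^ (-ξ) - 1) := by ext; simp [gpdQ, h]
    rw [this]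
    refine HasDerivAt.congr_deriv ((((Real.hasDerivAt_rpow_const (p := -ξ)
      (Or.inl ht.ne')).sub_const 1).const_mul (σ / ξ)).const_add μ) ?_
    field_simp

lemma gpdQ_mvt (μ σ ξ v : ℝ) (hv : v ∈ Ioo (0:ℝ) 1) :
    ∃ τ ∈ Ioo v 1, gpdQ μ σ ξ v - gpdQ μ σ ξ 1 = σ * τ ^ (-ξ - 1) * (1 - v) := by
  obtain ⟨τ, hτ, h⟩ := exists_hasDerivAt_eq_slope (gpdQ μ σ ξ) _ hv.2
    (fun x hx => (gpdQ_hasDerivAt μ σ ξ x (hv.1.trans_le hx.1)).continuousAt.continuousWithinAt)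
    (fun x hx => gpdQ_hasDerivAt μ σ ξ x (hv.1.trans hx.1))
  refine ⟨τ, hτ, ?_⟩
  have : (1 - v) ≠ 0 := by linarith [hv.2]
  field_simp at h
  linarith

/-- `φ v = log (u(v) - u(1))`. -/
noncomputable def phiQ (μ σ ξ : ℝ) (v : ℝ) : ℝ := Real.log (gpdQ μ σ ξ v - gpdQ μ σ ξ 1)

lemma phiQ_measurable (μ σ ξ : ℝ) : Measurable (phiQ μ σ ξ) := by
  have : Measurable (gpdQ μ σ ξ) := by
    unfold gpdQ
    split_ifs
    · fun_prop
    · fun_prop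
  unfold phiQ
  fun_prop

lemma log_integrableOn : IntegrableOn Real.log (Ioo 0 1) := by
  have := (intervalIntegral.intervalIntegrable_log' (a := 0) (b := 1)).1
  exact this.mono_set Ioo_subset_Ioc_self

lemma log_one_sub_integrableOn : IntegrableOn (fun v => Real.log (1 - v)) (Ioo 0 1) := by
  have := ((intervalIntegral.intervalIntegrable_log' (a := 1) (b := 0)).comp_sub_left 1)
  simp only [sub_self, sub_zero] at this
  exact this.1.mono_set Ioo_subset_Ioc_self

lemma phiQ_integrableOn (μ σ ξ : ℝ) (hσ : 0 < σ) : IntegrableOn (phiQ μ σ ξ) (Ioo 0 1) := by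
  have hI : IntegrableOn (fun v => ‖Real.log σ‖ + ‖Real.log (1 - v)‖ + |-ξ - 1| * ‖Real.log v‖)
      (Ioo 0 1) := by
    refine ((integrable_const _).add log_one_sub_integrableOn.norm).add
      (log_integrableOn.norm.const_mul _)
  refine Integrable.mono' hI (phiQ_measurable μ σ ξ).aestronglyMeasurable ?_
  rw [ae_restrict_iff' measurableSet_Ioo]
  refine Filter.Eventually.of_forall fun v hv => ?_
  obtain ⟨τ, hτ, h⟩ := gpdQ_mvt μ σ ξ v hv
  have h0 : 0 < τ := hv.1.trans hτ.1
  have h1 : 0 < 1 - v := by linarith [hv.2]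
  have h2 : phiQ μ σ ξ v = Real.log σ + Real.log (1 - v) + (-ξ - 1) * Real.log τ := by
    rw [phiQ, h, Real.log_mul (by positivity) h1.ne', Real.log_mul hσ.ne' (by positivity),
      Real.log_rpow h0]
    ring
  have h3 : |Real.log τ| ≤ |Real.log v| := by
    have ha := Real.log_le_log hv.1 hτ.1.le
    have hb := Real.log_nonpos h0.le hτ.2.le
    rw [abs_of_nonpos hb, abs_of_nonpos (ha.trans hb)]
    linarith
  rw [h2]
  refine (norm_add_le _ _).trans (add_le_add (norm_add_le _ _) ?_)
  rw [norm_mul]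
  exact mul_le_mul_of_nonneg_left h3 (abs_nonneg _)

lemma log_gpdQ_sub (μ σ ξ s t : ℝ) (hσ : 0 < σ) (hs : 0 < s) (hst : s < t) :
    Real.log (gpdQ μ σ ξ s - gpdQ μ σ ξ t) = -ξ * Real.log t + phiQ μ σ ξ (s / t) := by
  have ht : 0 < t := hs.trans hst
  have hv : s / t ∈ Ioo (0:ℝ) 1 := ⟨by positivity, (div_lt_one ht).2 hst⟩
  have h1 : gpdQ μ σ ξ s - gpdQ μ σ ξ t =
      t ^ (-ξ) * (gpdQ μ σ ξ (s / t) - gpdQ μ σ ξ 1) := by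
    by_cases h : ξ = 0
    · simp only [gpdQ, h, if_true, Real.log_div hs.ne' ht.ne', Real.log_one, neg_zero,
        Real.rpow_zero]
      ring
    · simp only [gpdQ, h, if_false, Real.div_rpow hs.le ht.le, Real.one_rpow]
      have : t ^ (-ξ) ≠ 0 := (Real.rpow_pos_of_pos ht _).ne'
      field_simp
      ring
  obtain ⟨τ, hτ, h⟩ := gpdQ_mvt μ σ ξ _ hv
  have h0 : 0 < τ := hv.1.trans hτ.1
  have h2 : 0 < 1 - s / t := by linarith [hv.2]
  have h3 : 0 < gpdQ μ σ ξ (s / t) - gpdQ μ σ ξ 1 := by rw [h]; positivity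
  rw [h1, Real.log_mul (Real.rpow_pos_of_pos ht _).ne' h3.ne', Real.log_rpow ht, phiQ]

lemma integral_pow_log (k : ℕ) : ∫ v in Ioo (0:ℝ) 1, v ^ k * Real.log v = -(1 / ((k:ℝ) + 1) ^ 2) := by
  rw [← integral_Ioc_eq_integral_Ioo, ← intervalIntegral.integral_of_le zero_le_one]
  have hk : (k:ℝ) + 1 ≠ 0 := by positivity
  rw [intervalIntegral.integral_eq_sub_of_hasDerivAt_of_le zero_le_one
    (f := fun v => v ^ k * (v * Real.log v) / (k + 1) - v ^ (k + 1) / (k + 1) ^ 2)]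
  · simp
  · exact (((continuous_pow k).mul Real.continuous_mul_log).div_const _ |>.sub
      ((continuous_pow (k + 1)).div_const _)).continuousOn
  · intro x hx
    have hx0 : x ≠ 0 := hx.1.ne'
    have h1 := ((hasDerivAt_pow (k + 1) x).mul (Real.hasDerivAt_log hx0)).div_const ((k:ℝ) + 1)
    have h2 := (hasDerivAt_pow (k + 1) x).div_const (((k:ℝ) + 1) ^ 2)
    have h3 := h1.sub h2
    convert h3 using 1
    · ext v; simp only [Pi.sub_apply, Pi.mul_apply]; ring
    · simp only [Nat.add_sub_cancel]; push_cast; field_simp; ring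
  · rw [intervalIntegrable_iff_integrableOn_Ioo_of_le zero_le_one]
    simpa using integrable_weight _ log_integrableOn k 0

lemma elemental_unbiased (n i m : ℕ) (h : i + m + 3 ≤ n) (μ σ ξ : ℝ) (hσ : 0 < σ) :
    IntegrableOn (fun g => elemental (i + 1) (i + m + 3) (sample n (gpdQ μ σ ξ) g)) (simplex n) ∧
    ∫ g in simplex n, elemental (i + 1) (i + m + 3) (sample n (gpdQ μ σ ξ) g)
      = ξ / n.factorial := by
  set a : Fin n := ⟨i, by omega⟩ with ha
  set b : Fin n := ⟨i + 1, by omega⟩ with hb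
  set p : Fin n := ⟨i + m + 1, by omega⟩ with hp
  set q : Fin n := ⟨i + m + 2, by omega⟩ with hq
  have hap : a < p := by simp only [ha, hp, Fin.lt_def]; omega
  have haq : a < q := by simp only [ha, hq, Fin.lt_def]; omega
  have hbq : b < q := by simp only [hb, hq, Fin.lt_def]; omega
  have hpq : p < q := by simp only [hp, hq, Fin.lt_def]; omega
  set φ := phiQ μ σ ξ with hφ
  have hφm := phiQ_measurable μ σ ξ
  have hφi := phiQ_integrableOn μ σ ξ hσ
  have hcongr : ∀ g ∈ simplex n, elemental (i + 1) (i + m + 3) (sample n (gpdQ μ σ ξ) g) =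
      ((i + m + 2 : ℝ)) * φ (g a / g p) - (m + 1 : ℝ) * φ (g a / g q) - (i + 1 : ℝ) * φ (g b / g q)
        - ξ * (i + m + 2) * Real.log (g p / g q) := by
    rintro g ⟨hg1, hg2⟩
    have s1 : sample n (gpdQ μ σ ξ) g (i + 1) = gpdQ μ σ ξ (g a) := by
      simp only [sample, Nat.add_sub_cancel, show i < n by omega, dif_pos, ha]
    have s2 : sample n (gpdQ μ σ ξ) g (i + 1 + 1) = gpdQ μ σ ξ (g b) := by
      simp only [sample, Nat.add_sub_cancel, show i + 1 < n by omega, dif_pos, hb]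
    have s3 : sample n (gpdQ μ σ ξ) g (i + m + 3 - 1) = gpdQ μ σ ξ (g p) := by
      simp only [sample, show i + m + 3 - 1 - 1 = i + m + 1 by omega,
        show i + m + 1 < n by omega, dif_pos, hp]
    have s4 : sample n (gpdQ μ σ ξ) g (i + m + 3) = gpdQ μ σ ξ (g q) := by
      simp only [sample, show i + m + 3 - 1 = i + m + 2 by omega,
        show i + m + 2 < n by omega, dif_pos, hq]
    rw [elemental, s1, s2, s3, s4,
      log_gpdQ_sub μ σ ξ _ _ hσ (hg2 a).1 (hg1 hap), log_gpdQ_sub μ σ ξ _ _ hσ (hg2 a).1 (hg1 haq),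
      log_gpdQ_sub μ σ ξ _ _ hσ (hg2 b).1 (hg1 hbq),
      Real.log_div (hg2 p).1.ne' (hg2 q).1.ne']
    push_cast
    ring
  obtain ⟨i1, e1⟩ := integral_ratio φ hφm hφi n a p hap
  obtain ⟨i2, e2⟩ := integral_ratio φ hφm hφi n a q haq
  obtain ⟨i3, e3⟩ := integral_ratio φ hφm hφi n b q hbq
  obtain ⟨i4, e4⟩ := integral_ratio Real.log Real.measurable_log log_integrableOn n p q hpq
  have hms : MeasurableSet (simplex n) := measurableSet_simplexS n 1
  have j1 := i1.const_mul (i + m + 2 : ℝ)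
  have j2 := i2.const_mul (m + 1 : ℝ)
  have j3 := i3.const_mul (i + 1 : ℝ)
  have j4 := i4.const_mul (ξ * (i + m + 2))
  constructor
  · rw [integrableOn_congr_fun hcongr hms]
    exact ((j1.sub j2).sub j3).sub j4
  · rw [setIntegral_congr_fun hms hcongr, integral_sub (by exact (j1.sub j2).sub j3) j4,
      integral_sub (by exact j1.sub j2) j3, integral_sub j1 j2, integral_const_mul, integral_const_mul,
      integral_const_mul, integral_const_mul, e1, e2, e3, e4]
    have w1 : ((p : ℕ) - 1 - a) = m := by simp only [ha, hp]; omega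
    have w2 : ((q : ℕ) - 1 - a) = m + 1 := by simp only [ha, hq]; omega
    have w3 : ((q : ℕ) - 1 - b) = m := by simp only [hb, hq]; omega
    have w4 : ((q : ℕ) - 1 - p) = 0 := by simp only [hp, hq]; omega
    unfold ratioC
    rw [w1, w2, w3, w4]
    simp only [ha, hb, hp, hq]
    have k1 := (integrable_weight φ hφi i m)
    have k2 := (integrable_weight φ hφi i (m + 1))
    have k3 := (integrable_weight φ hφi (i + 1) m)
    have hsum : ∫ v in Ioo (0:ℝ) 1, v ^ i * (1 - v) ^ m * φ v =
        (∫ v in Ioo (0:ℝ) 1, v ^ i * (1 - v) ^ (m + 1) * φ v) +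
        ∫ v in Ioo (0:ℝ) 1, v ^ (i + 1) * (1 - v) ^ m * φ v := by
      rw [← integral_add k2 k3]
      congr 1
      ext v
      ring
    rw [integral_const_mul, integral_const_mul, integral_const_mul, integral_const_mul, hsum]
    simp only [pow_zero, mul_one]
    rw [integral_pow_log]
    generalize (∫ v in Ioo (0:ℝ) 1, v ^ i * (1 - v) ^ (m + 1) * φ v) = X
    generalize (∫ v in Ioo (0:ℝ) 1, v ^ (i + 1) * (1 - v) ^ m * φ v) = Y
    have f1 : ((i + m + 2).factorial : ℝ) = (i + m + 2) * (i + m + 1).factorial := by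
      rw [show i + m + 2 = (i + m + 1) + 1 by ring, Nat.factorial_succ]; push_cast; ring
    rw [f1, Nat.factorial_succ i, Nat.factorial_succ m]
    push_cast
    have z1 : (i : ℝ) + m + 2 ≠ 0 := by positivity
    have z2 : (i : ℝ) + m + 1 + 1 ≠ 0 := by positivity
    rw [show (i : ℝ) + m + 1 + 1 = i + m + 2 by ring]
    simp only [Nat.factorial_zero, Nat.cast_one, mul_one]
    field_simp
    ring

/-- Every unit-sum linear combination of elemental estimators is an unbiased estimator
of the GPD tail parameter, for every `ξ ∈ ℝ` (possibly `0`). -/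
theorem combination_unbiased (n : ℕ) (hn : 3 ≤ n) (μ σ ξ : ℝ) (hσ : 0 < σ)
    (r : ℕ → ℕ → ℝ)
    (hr : ∑ I ∈ Finset.Icc 1 n, ∑ J ∈ Finset.Icc (I + 2) n, r I J = 1) :
    IntegrableOn
      (fun g => ∑ I ∈ Finset.Icc 1 n, ∑ J ∈ Finset.Icc (I + 2) n,
        r I J * elemental I J (sample n (gpdQ μ σ ξ) g)) (simplex n) volume ∧
    (n.factorial : ℝ) *
      ∫ g in simplex n, ∑ I ∈ Finset.Icc 1 n, ∑ J ∈ Finset.Icc (I + 2) n,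
        r I J * elemental I J (sample n (gpdQ μ σ ξ) g) = ξ := by

  have key : ∀ I ∈ Finset.Icc 1 n, ∀ J ∈ Finset.Icc (I + 2) n,
      IntegrableOn (fun g => elemental I J (sample n (gpdQ μ σ ξ) g)) (simplex n) ∧
      ∫ g in simplex n, elemental I J (sample n (gpdQ μ σ ξ) g) = ξ / n.factorial := by
    intro I hI J hJ
    rw [Finset.mem_Icc] at hI hJ
    obtain ⟨i, rfl⟩ : ∃ i, I = i + 1 := ⟨I - 1, by omega⟩
    obtain ⟨m, rfl⟩ : ∃ m, J = i + m + 3 := ⟨J - i - 3, by omega⟩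
    exact elemental_unbiased n i m hJ.2 μ σ ξ hσ
  have hint : ∀ I ∈ Finset.Icc 1 n, ∀ J ∈ Finset.Icc (I + 2) n,
      Integrable (fun g => r I J * elemental I J (sample n (gpdQ μ σ ξ) g))
        (volume.restrict (simplex n)) :=
    fun I hI J hJ => (key I hI J hJ).1.const_mul _
  constructor
  · exact integrable_finsetSum _ fun I hI => integrable_finsetSum _ fun J hJ => hint I hI J hJ
  · rw [integral_finsetSum _ fun I hI => integrable_finsetSum _ fun J hJ => hint I hI J hJ]
    have h1 : ∀ I ∈ Finset.Icc 1 n, ∫ g in simplex n, ∑ J ∈ Finset.Icc (I + 2) n,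
        r I J * elemental I J (sample n (gpdQ μ σ ξ) g)
        = (∑ J ∈ Finset.Icc (I + 2) n, r I J) * (ξ / n.factorial) := by
      intro I hI
      rw [integral_finsetSum _ fun J hJ => hint I hI J hJ, Finset.sum_mul]
      refine Finset.sum_congr rfl fun J hJ => ?_
      rw [integral_const_mul, (key I hI J hJ).2]
    rw [Finset.sum_congr rfl h1, ← Finset.sum_mul, hr, one_mul]
    field_simp
end

section
/- Fix m ∈ ℕ. If real numbers b_0, …, b_m and c satisfy ∑_{k=0}^{m} b_k · ∫₀¹ φ^k·log(1−φ^γ) dφ = c·γ for every γ > 0, then c = 0 and b_0 = b_1 = ⋯ = b_m = 0. -/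
open MeasureTheory Real Set

lemma gk_term (k : ℕ) (γ : ℝ) (hγ : 0 < γ) (n : ℕ) :
    IntegrableOn (fun φ : ℝ => φ ^ k * ((φ ^ γ) ^ (n + 1) / ((n : ℝ) + 1))) (Set.Ioo 0 1) ∧
    ∫ φ in Set.Ioo (0 : ℝ) 1, φ ^ k * ((φ ^ γ) ^ (n + 1) / ((n : ℝ) + 1)) =
      1 / ((n : ℝ) + 1) * (1 / (((n : ℝ) + 1) * γ + (k + 1))) := by
  have hn : (0 : ℝ) < (n : ℝ) + 1 := by positivity
  have hs : 0 < ((n : ℝ) + 1) * γ := by positivity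
  have hk : (0 : ℝ) ≤ k := by positivity
  have hr : -1 < ((n : ℝ) + 1) * γ + k := by linarith
  have heq : ∀ φ ∈ Set.Ioo (0 : ℝ) 1, 1 / ((n : ℝ) + 1) * φ ^ (((n : ℝ) + 1) * γ + k) =
      φ ^ k * ((φ ^ γ) ^ (n + 1) / ((n : ℝ) + 1)) := by
    intro φ hφ
    rw [Real.rpow_add hφ.1, Real.rpow_natCast, mul_comm ((n : ℝ) + 1) γ, Real.rpow_mul hφ.1.le]
    have : (φ ^ γ) ^ ((n : ℝ) + 1) = (φ ^ γ) ^ (n + 1) := by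
      rw [← Real.rpow_natCast]; push_cast; rfl
    rw [this]; ring
  constructor
  · have h1 := (intervalIntegral.intervalIntegrable_rpow' (a := 0) (b := 1) hr).const_mul
      (1 / ((n : ℝ) + 1))
    rw [intervalIntegrable_iff_integrableOn_Ioo_of_le zero_le_one] at h1
    exact h1.congr_fun heq measurableSet_Ioo
  · rw [← setIntegral_congr_fun measurableSet_Ioo heq, integral_const_mul,
      ← integral_Ioc_eq_integral_Ioo, ← intervalIntegral.integral_of_le zero_le_one,
      integral_rpow (Or.inl hr), Real.one_rpow, Real.zero_rpow (by linarith), sub_zero, add_assoc]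

lemma gk_summable_sq : Summable (fun n : ℕ => 1 / ((n : ℝ) + 1) ^ 2) := by
  have := (summable_nat_add_iff 1).2 (Real.summable_one_div_nat_pow.2 (one_lt_two))
  simpa using this

lemma gk_hasSum (k : ℕ) (γ : ℝ) (hγ : 0 < γ) :
    HasSum (fun n : ℕ => 1 / ((n : ℝ) + 1) * (1 / (((n : ℝ) + 1) * γ + (k + 1))))
      (-∫ φ in Set.Ioo (0 : ℝ) 1, φ ^ k * Real.log (1 - φ ^ γ)) := by
  have hsum : Summable (fun n : ℕ => 1 / ((n : ℝ) + 1) * (1 / (((n : ℝ) + 1) * γ + (k + 1)))) := by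
    refine Summable.of_nonneg_of_le (fun n => by positivity) (fun n => ?_)
      (gk_summable_sq.mul_left (1 / γ))
    have hn : (0 : ℝ) < (n : ℝ) + 1 := by positivity
    have : 1 / (((n : ℝ) + 1) * γ + (k + 1)) ≤ 1 / (((n : ℝ) + 1) * γ) := by
      apply one_div_le_one_div_of_le (by positivity)
      have : (0 : ℝ) ≤ k := by positivity
      linarith
    calc _ ≤ 1 / ((n : ℝ) + 1) * (1 / (((n : ℝ) + 1) * γ)) := by gcongr
      _ = _ := by field_simp
  have h := hasSum_integral_of_summable_integral_norm
    (μ := volume.restrict (Set.Ioo (0 : ℝ) 1))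
    (F := fun (n : ℕ) (φ : ℝ) => φ ^ k * ((φ ^ γ) ^ (n + 1) / ((n : ℝ) + 1)))
    (fun n => (gk_term k γ hγ n).1) (by
      refine hsum.congr (fun n => ?_)
      rw [← (gk_term k γ hγ n).2]
      refine setIntegral_congr_fun measurableSet_Ioo (fun φ hφ => ?_)
      have := hφ.1
      exact (Real.norm_of_nonneg (by positivity)).symm)
  simp_rw [(gk_term k γ hγ _).2] at h
  refine (congrArg (HasSum _) ?_).mpr h
  rw [← integral_neg]
  refine setIntegral_congr_fun measurableSet_Ioo (fun φ hφ => ?_)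
  have h1 : |φ ^ γ| < 1 := by
    rw [abs_of_nonneg (Real.rpow_nonneg hφ.1.le _)]
    exact Real.rpow_lt_one hφ.1.le hφ.2 hγ
  have := (Real.hasSum_pow_div_log_of_abs_lt_one h1).mul_left (φ ^ k)
  rw [this.tsum_eq]; ring

lemma gk_alg (m : ℕ) (b : ℕ → ℝ) (j : ℕ)
    (hp : ∀ i < j, ∑ k ∈ Finset.range (m + 1), b k * (-((k : ℝ) + 1)) ^ i = 0) (X : ℝ) (hX : 0 < X) :
    X ^ j * ∑ k ∈ Finset.range (m + 1), b k * (1 / (X + (k + 1))) =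
      ∑ k ∈ Finset.range (m + 1), b k * (-((k : ℝ) + 1)) ^ j * (1 / (X + (k + 1))) := by
  induction j with
  | zero => simp
  | succ j ih =>
    rw [pow_succ', mul_assoc, ih (fun i hi => hp i (by omega)), ← sub_zero (X * _),
      ← hp j (by omega), Finset.mul_sum, ← Finset.sum_sub_distrib]
    refine Finset.sum_congr rfl (fun k _ => ?_)
    have : X + ((k : ℝ) + 1) ≠ 0 := by positivity
    field_simp
    ring

lemma gk_tendsto (m : ℕ) (b : ℕ → ℝ) (j : ℕ)
    (hp : ∀ i < j, ∑ k ∈ Finset.range (m + 1), b k * (-((k : ℝ) + 1)) ^ i = 0) :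
    Filter.Tendsto (fun γ : ℝ => γ ^ (j + 1) * ∑ k ∈ Finset.range (m + 1),
        b k * ∫ φ in Set.Ioo (0 : ℝ) 1, φ ^ k * Real.log (1 - φ ^ γ)) Filter.atTop
      (nhds (-∑' n : ℕ, (∑ k ∈ Finset.range (m + 1), b k * (-((k : ℝ) + 1)) ^ j) *
        (1 / ((n : ℝ) + 1) ^ (j + 2)))) := by
  have hterm : ∀ (n k : ℕ) (γ : ℝ), 0 < γ →
      γ / (((n : ℝ) + 1) * γ + (k + 1)) ≤ 1 / ((n : ℝ) + 1) := by
    intro n k γ hγ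
    rw [div_le_div_iff₀ (by positivity) (by positivity)]
    have : (0 : ℝ) ≤ k := by positivity
    nlinarith
  have hT : Filter.Tendsto (fun γ : ℝ => ∑' n : ℕ, 1 / ((n : ℝ) + 1) ^ (j + 1) *
      ∑ k ∈ Finset.range (m + 1), b k * (-((k : ℝ) + 1)) ^ j * (γ / (((n : ℝ) + 1) * γ + (k + 1))))
      Filter.atTop (nhds (∑' n : ℕ, (∑ k ∈ Finset.range (m + 1), b k * (-((k : ℝ) + 1)) ^ j) *
        (1 / ((n : ℝ) + 1) ^ (j + 2)))) := by
    refine tendsto_tsum_of_dominated_convergence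
      (bound := fun n : ℕ => (∑ k ∈ Finset.range (m + 1), |b k * (-((k : ℝ) + 1)) ^ j|) *
        (1 / ((n : ℝ) + 1) ^ 2)) (gk_summable_sq.mul_left _) ?_ ?_
    · intro n
      have hn : (0 : ℝ) < (n : ℝ) + 1 := by positivity
      have : (∑ k ∈ Finset.range (m + 1), b k * (-((k : ℝ) + 1)) ^ j) *
        (1 / ((n : ℝ) + 1) ^ (j + 2)) = 1 / ((n : ℝ) + 1) ^ (j + 1) *
          ∑ k ∈ Finset.range (m + 1), b k * (-((k : ℝ) + 1)) ^ j * (1 / ((n : ℝ) + 1)) := by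
        rw [← Finset.sum_mul]; field_simp; ring
      rw [this]
      refine Filter.Tendsto.const_mul _ (tendsto_finsetSum _ fun k _ => Filter.Tendsto.const_mul _ ?_)
      have h1 : Filter.Tendsto (fun γ : ℝ => 1 / (((n : ℝ) + 1) + ((k : ℝ) + 1) * γ⁻¹))
          Filter.atTop (nhds (1 / (((n : ℝ) + 1) + ((k : ℝ) + 1) * 0))) :=
        tendsto_const_nhds.div (tendsto_const_nhds.add (tendsto_inv_atTop_zero.const_mul _))
          (by simpa using hn.ne')
      rw [mul_zero, add_zero] at h1
      refine h1.congr' ?_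
      filter_upwards [Filter.eventually_gt_atTop 0] with γ hγ
      field_simp
    · filter_upwards [Filter.eventually_gt_atTop 0] with γ hγ n
      have hn : (1 : ℝ) ≤ (n : ℝ) + 1 := by simp
      have hn0 : (0 : ℝ) < (n : ℝ) + 1 := by positivity
      rw [norm_mul, Real.norm_of_nonneg (by positivity : 0 ≤ 1 / ((n : ℝ) + 1) ^ (j + 1))]
      have h1 : 1 / ((n : ℝ) + 1) ^ (j + 1) ≤ 1 / ((n : ℝ) + 1) := by
        apply one_div_le_one_div_of_le hn0
        exact le_self_pow₀ hn (by omega)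
      have h2 : ‖∑ k ∈ Finset.range (m + 1),
          b k * (-((k : ℝ) + 1)) ^ j * (γ / (((n : ℝ) + 1) * γ + (k + 1)))‖ ≤
          (∑ k ∈ Finset.range (m + 1), |b k * (-((k : ℝ) + 1)) ^ j|) * (1 / ((n : ℝ) + 1)) := by
        rw [Finset.sum_mul]
        refine norm_sum_le_of_le _ (fun k _ => ?_)
        rw [norm_mul, Real.norm_of_nonneg
          (by positivity : 0 ≤ γ / (((n : ℝ) + 1) * γ + (k + 1))), Real.norm_eq_abs]
        exact mul_le_mul_of_nonneg_left (hterm n k γ hγ) (abs_nonneg _)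
      calc _ ≤ 1 / ((n : ℝ) + 1) * ((∑ k ∈ Finset.range (m + 1), |b k * (-((k : ℝ) + 1)) ^ j|) *
            (1 / ((n : ℝ) + 1))) := mul_le_mul h1 h2 (norm_nonneg _) (by positivity)
        _ = _ := by field_simp
  refine hT.neg.congr' ?_
  filter_upwards [Filter.eventually_gt_atTop 0] with γ hγ
  have hS : HasSum (fun n : ℕ => γ ^ (j + 1) * ∑ k ∈ Finset.range (m + 1),
      b k * (1 / ((n : ℝ) + 1) * (1 / (((n : ℝ) + 1) * γ + (k + 1)))))
      (γ ^ (j + 1) * ∑ k ∈ Finset.range (m + 1),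
        b k * (-∫ φ in Set.Ioo (0 : ℝ) 1, φ ^ k * Real.log (1 - φ ^ γ))) :=
    (hasSum_sum fun k _ => (gk_hasSum k γ hγ).mul_left (b k)).mul_left _
  have hfun : ∀ n : ℕ, 1 / ((n : ℝ) + 1) ^ (j + 1) *
      ∑ k ∈ Finset.range (m + 1), b k * (-((k : ℝ) + 1)) ^ j * (γ / (((n : ℝ) + 1) * γ + (k + 1))) =
      γ ^ (j + 1) * ∑ k ∈ Finset.range (m + 1),
      b k * (1 / ((n : ℝ) + 1) * (1 / (((n : ℝ) + 1) * γ + (k + 1)))) := by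
    intro n
    have hn0 : (0 : ℝ) < (n : ℝ) + 1 := by positivity
    have ha := gk_alg m b j hp (((n : ℝ) + 1) * γ) (by positivity)
    have e1 : ∑ k ∈ Finset.range (m + 1),
        b k * (-((k : ℝ) + 1)) ^ j * (γ / (((n : ℝ) + 1) * γ + (k + 1))) =
        γ * ∑ k ∈ Finset.range (m + 1),
        b k * (-((k : ℝ) + 1)) ^ j * (1 / (((n : ℝ) + 1) * γ + (k + 1))) := by
      rw [Finset.mul_sum]; exact Finset.sum_congr rfl fun k _ => by ring
    have e2 : ∑ k ∈ Finset.range (m + 1),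
        b k * (1 / ((n : ℝ) + 1) * (1 / (((n : ℝ) + 1) * γ + (k + 1)))) =
        1 / ((n : ℝ) + 1) * ∑ k ∈ Finset.range (m + 1),
        b k * (1 / (((n : ℝ) + 1) * γ + (k + 1))) := by
      rw [Finset.mul_sum]; exact Finset.sum_congr rfl fun k _ => by ring
    rw [e1, e2, ← ha]
    generalize ∑ k ∈ Finset.range (m + 1), b k * (1 / (((n : ℝ) + 1) * γ + (k + 1))) = S
    rw [mul_pow]
    field_simp
    ring
  simp_rw [hfun]
  rw [hS.tsum_eq]
  simp only [mul_neg, Finset.sum_neg_distrib, neg_neg]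

/-- If `∑_{k=0}^m b_k ∫₀¹ φ^k log(1−φ^γ) dφ = c·γ` for every `γ > 0`, then `c = 0`
and `b_0 = ⋯ = b_m = 0`. -/
theorem gk_affine_independence (m : ℕ) (b : ℕ → ℝ) (c : ℝ)
    (h : ∀ γ : ℝ, 0 < γ →
      ∑ k ∈ Finset.range (m + 1),
        b k * ∫ φ in Set.Ioo (0 : ℝ) 1, φ ^ k * Real.log (1 - φ ^ γ) = c * γ) :
    c = 0 ∧ ∀ k ≤ m, b k = 0 := by
  have hc : c = 0 := by
    have h0 := gk_tendsto m b 0 (by simp)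
    have h1 := (h0.mul tendsto_inv_atTop_zero).mul tendsto_inv_atTop_zero
    rw [mul_zero] at h1
    refine tendsto_nhds_unique (tendsto_const_nhds.congr' ?_) h1
    filter_upwards [Filter.eventually_gt_atTop 0] with γ hγ
    rw [h γ hγ]
    field_simp
    simp
  refine ⟨hc, ?_⟩
  have hp : ∀ j : ℕ, ∑ k ∈ Finset.range (m + 1), b k * (-((k : ℝ) + 1)) ^ j = 0 := by
    intro j
    induction j using Nat.strong_induction_on with
    | _ j ih =>
      have h0 := gk_tendsto m b j ih
      have h1 := tendsto_nhds_unique h0 (tendsto_const_nhds.congr' (f₁ := fun _ => (0 : ℝ)) (by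
        filter_upwards [Filter.eventually_gt_atTop 0] with γ hγ
        rw [h γ hγ, hc]; simp))
      rw [tsum_mul_left, neg_eq_zero, mul_eq_zero] at h1
      refine h1.resolve_right (ne_of_gt ?_)
      have hs : Summable (fun n : ℕ => 1 / ((n : ℝ) + 1) ^ (j + 2)) := by
        have := (summable_nat_add_iff 1).2
          (Real.summable_one_div_nat_pow.2 (by omega : 1 < j + 2))
        simpa using this
      exact hs.tsum_pos (fun n => by positivity) 0 (by positivity)
  have hv := Matrix.eq_zero_of_forall_pow_sum_mul_pow_eq_zero (n := m + 1)
    (f := fun k : Fin (m + 1) => -(((k : ℕ) : ℝ) + 1)) (v := fun k => b k) (by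
      intro x y hxy
      simp only [neg_inj, add_left_inj, Nat.cast_inj] at hxy
      exact Fin.ext hxy) (fun i => by
      have := hp i
      rw [Finset.sum_range] at this
      exact this)
  intro k hk
  exact congrFun hv ⟨k, by omega⟩
end
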